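/- Let P and Q be real symmetric N×N matrices and 1 ≤ k ≤ N. Then the sum of the k largest eigenvalues of P + Q is at most the sum of the k largest eigenvalues of P plus the sum of the k largest eigenvalues of Q; that is, Λ^k(P+Q) ≤ Λ^k(P) + Λ^k(Q). -/

import Mathlib

open Matrix

/-! If `0 ≤ E ≤ 1` and `tr E = k`, then in an eigenbasis of `A` the diagonal of `E` is a family of
weights in `[0, 1]` of total mass `k`, so `tr (E A)`, the sum of the eigenvalues of `A` with these
weights, is at most the sum of the `k` largest ones. Taking for `E` the orthogonal projection onto
the span of the top `k` eigenvectors of `P + Q` turns `tr (E (P + Q))` into the sum of the `k`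
largest eigenvalues of `P + Q`, while `tr (E P)` and `tr (E Q)` are bounded as above. -/

section TopSet

/-- `S` carries the `#S` largest values of `f`, ties being broken arbitrarily. This describes the
positions of the largest eigenvalues without reference to an ordering of the index type. -/
def IsTopSet {ι α : Type*} [LE α] (f : ι → α) (S : Finset ι) : Prop :=
  ∀ ⦃i⦄, i ∈ S → ∀ ⦃j⦄, j ∉ S → f j ≤ f i

lemma isTopSet_of_antitone {ι α : Type*} [LinearOrder ι] [Preorder α] {f : ι → α} (hf : Antitone f)
    {S : Finset ι} (hS : IsLowerSet (S : Set ι)) : IsTopSet f S :=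
  fun _ hi _ hj ↦ hf (le_of_not_ge fun hji ↦ hj (hS hji hi))

lemma isLowerSet_filter_val_lt (N k : ℕ) :
    IsLowerSet (({l : Fin N | (l : ℕ) < k} : Finset (Fin N)) : Set (Fin N)) := fun i j hji hi ↦ by
  have hik : (i : ℕ) < k := by simpa using hi
  simpa using (Fin.le_def.1 hji).trans_lt hik

lemma IsTopSet.sum_mul_le_sum {ι R : Type*} [Fintype ι] [Ring R] [LinearOrder R]
    [IsStrictOrderedRing R] {f : ι → R} {S : Finset ι} (hS : IsTopSet f S) {c : ι → R}
    (hc₀ : ∀ i, 0 ≤ c i) (hc₁ : ∀ i, c i ≤ 1) (hc : ∑ i, c i = S.card) :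
    ∑ i, c i * f i ≤ ∑ i ∈ S, f i := by
  classical
  obtain rfl | hne := S.eq_empty_or_nonempty
  · have hc_zero : ∀ i, c i = 0 := by
      simpa [Finset.sum_eq_zero_iff_of_nonneg fun i _ ↦ hc₀ i] using hc
    simp [hc_zero]
  obtain ⟨m, hm, hmin⟩ := S.exists_min_image f hne
  -- As `∑ i, c i = #S`, subtracting the threshold `f m` from `f` shifts both sides equally.
  have hterm (i : ι) : c i * (f i - f m) ≤ if i ∈ S then f i - f m else 0 := by
    split_ifs with hi
    · exact mul_le_of_le_one_left (sub_nonneg.2 (hmin i hi)) (hc₁ i)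
    · exact mul_nonpos_of_nonneg_of_nonpos (hc₀ i) (sub_nonpos.2 (hS hm hi))
  have hshifted : ∑ i, c i * (f i - f m) ≤ ∑ i ∈ S, (f i - f m) := by
    simpa [Finset.sum_ite_mem] using Finset.sum_le_sum fun i (_ : i ∈ Finset.univ) ↦ hterm i
  simpa [mul_sub, Finset.sum_sub_distrib, ← Finset.sum_mul, hc] using hshifted

end TopSet

section FractionalProjection

open scoped ComplexOrder

variable {n 𝕜 : Type*} [Fintype n] [DecidableEq n] [RCLike 𝕜] {E U : Matrix n n 𝕜} {k : ℕ}

/-- A Hermitian matrix with `0 ≤ E ≤ 1` and `tr E = k`. These matrices, which form the convex hull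
of the orthogonal projections of rank `k`, are the test matrices in the variational bound for sums
of `k` eigenvalues. The two order relations are expressed by positive semidefiniteness. -/
structure IsFractionalProjection (E : Matrix n n 𝕜) (k : ℕ) : Prop where
  posSemidef : E.PosSemidef
  posSemidef_one_sub : (1 - E).PosSemidef
  trace_eq : E.trace = k

lemma isFractionalProjection_diagonal_indicator (s : Finset n) :
    IsFractionalProjection (diagonal fun i ↦ if i ∈ s then (1 : 𝕜) else 0) s.card where
  posSemidef := posSemidef_diagonal_iff.2 fun i ↦ by split_ifs <;> simp
  posSemidef_one_sub := by
    rw [← diagonal_one, diagonal_sub]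
    exact posSemidef_diagonal_iff.2 fun i ↦ by split_ifs <;> simp
  trace_eq := by simp [trace_diagonal]

namespace IsFractionalProjection

lemma conjTranspose_mul_mul (hE : IsFractionalProjection E k) (hU : Uᴴ * U = 1) :
    IsFractionalProjection (Uᴴ * E * U) k where
  posSemidef := hE.posSemidef.conjTranspose_mul_mul_same U
  posSemidef_one_sub := by
    simpa [Matrix.mul_sub, Matrix.sub_mul, hU] using
      hE.posSemidef_one_sub.conjTranspose_mul_mul_same U
  trace_eq := by rw [trace_mul_cycle, mul_eq_one_comm.1 hU, Matrix.one_mul, hE.trace_eq]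

lemma mul_mul_conjTranspose (hE : IsFractionalProjection E k) (hU : Uᴴ * U = 1) :
    IsFractionalProjection (U * E * Uᴴ) k := by
  simpa using hE.conjTranspose_mul_mul (U := Uᴴ) (by simpa using mul_eq_one_comm.1 hU)

variable {S : Finset n} {f : n → ℝ}

lemma re_trace_mul_diagonal_le (hE : IsFractionalProjection E S.card) (hS : IsTopSet f S) :
    RCLike.re (E * diagonal (RCLike.ofReal ∘ f)).trace ≤ ∑ i ∈ S, f i := by
  have htrace : RCLike.re (E * diagonal (RCLike.ofReal ∘ f)).trace
      = ∑ i, RCLike.re (E i i) * f i := by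
    simp [trace, mul_diagonal]
  rw [htrace]
  refine hS.sum_mul_le_sum (fun i ↦ ?_) (fun i ↦ ?_) ?_
  · exact (RCLike.nonneg_iff.1 hE.posSemidef.diag_nonneg).1
  · have hdiag : 0 ≤ RCLike.re ((1 - E) i i) :=
      (RCLike.nonneg_iff.1 hE.posSemidef_one_sub.diag_nonneg).1
    simpa using hdiag
  · simpa [trace] using congrArg RCLike.re hE.trace_eq

lemma re_trace_mul_le (hE : IsFractionalProjection E S.card) (hS : IsTopSet f S)
    (hU : Uᴴ * U = 1) :
    RCLike.re (E * (U * diagonal (RCLike.ofReal ∘ f) * Uᴴ)).trace ≤ ∑ i ∈ S, f i := by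
  have hcycle : (E * (U * diagonal (RCLike.ofReal ∘ f) * Uᴴ)).trace
      = (Uᴴ * E * U * diagonal (RCLike.ofReal ∘ f)).trace := by
    rw [← Matrix.mul_assoc, trace_mul_comm]
    simp only [Matrix.mul_assoc]
  rw [hcycle]
  exact (hE.conjTranspose_mul_mul hU).re_trace_mul_diagonal_le hS

end IsFractionalProjection

lemma re_trace_spectralProjection_mul (hU : Uᴴ * U = 1) (s : Finset n) (f : n → ℝ) :
    RCLike.re (U * diagonal (fun i ↦ if i ∈ s then (1 : 𝕜) else 0) * Uᴴ *
      (U * diagonal (RCLike.ofReal ∘ f) * Uᴴ)).trace = ∑ i ∈ s, f i := by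
  set D : Matrix n n 𝕜 := diagonal fun i ↦ if i ∈ s then (1 : 𝕜) else 0
  set F : Matrix n n 𝕜 := diagonal (RCLike.ofReal ∘ f)
  have hcancel : (U * D * Uᴴ * (U * F * Uᴴ)).trace = (D * F).trace :=
    calc (U * D * Uᴴ * (U * F * Uᴴ)).trace
        = (U * D * (Uᴴ * U) * F * Uᴴ).trace := by simp only [Matrix.mul_assoc]
      _ = (U * (D * F) * Uᴴ).trace := by rw [hU, Matrix.mul_one, Matrix.mul_assoc U]
      _ = (D * F).trace := by rw [trace_mul_cycle, hU, Matrix.one_mul]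
  rw [hcancel]
  simp [D, F, trace_diagonal]

theorem ky_fan_top_k_eigenvalue_sum_subadditive_general
    {P Q Up Uq Ur : Matrix n n 𝕜} {p q r : n → ℝ} {s S T : Finset n}
    (hUp : Upᴴ * Up = 1) (hP : P = Up * diagonal (RCLike.ofReal ∘ p) * Upᴴ)
    (hS : IsTopSet p S) (hScard : S.card = s.card)
    (hUq : Uqᴴ * Uq = 1) (hQ : Q = Uq * diagonal (RCLike.ofReal ∘ q) * Uqᴴ)
    (hT : IsTopSet q T) (hTcard : T.card = s.card)
    (hUr : Urᴴ * Ur = 1) (hPQ : P + Q = Ur * diagonal (RCLike.ofReal ∘ r) * Urᴴ) :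
    ∑ i ∈ s, r i ≤ ∑ i ∈ S, p i + ∑ i ∈ T, q i := by
  set E := Ur * diagonal (fun i ↦ if i ∈ s then (1 : 𝕜) else 0) * Urᴴ
  have hE : IsFractionalProjection E s.card :=
    (isFractionalProjection_diagonal_indicator s).mul_mul_conjTranspose hUr
  calc ∑ i ∈ s, r i
      = RCLike.re (E * (P + Q)).trace := by rw [hPQ, re_trace_spectralProjection_mul hUr]
    _ = RCLike.re (E * P).trace + RCLike.re (E * Q).trace := by
      rw [Matrix.mul_add, trace_add, map_add]
    _ ≤ ∑ i ∈ S, p i + ∑ i ∈ T, q i := by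
      rw [hP, hQ]
      exact add_le_add ((hScard ▸ hE).re_trace_mul_le hS hUp) ((hTcard ▸ hE).re_trace_mul_le hT hUq)

end FractionalProjection

/-- Ky Fan subadditivity: for real symmetric `P`, `Q` of size `N`
with `1 ≤ k ≤ N`, the sum of the `k` largest eigenvalues of `P + Q` is at most
the sum of the `k` largest eigenvalues of `P` plus that of `Q`. Eigenvalues in
descending order are given via orthogonal spectral decompositions with antitone
eigenvalue functions. -/
theorem ky_fan_top_k_eigenvalue_sum_subadditive
    {N k : ℕ} (hk1 : 1 ≤ k) (hkN : k ≤ N)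
    (P Q : Matrix (Fin N) (Fin N) ℝ) (hP : P.IsSymm) (hQ : Q.IsSymm)
    (p : Fin N → ℝ) (Up : Matrix (Fin N) (Fin N) ℝ)
    (hUp : Upᵀ * Up = 1) (hPdecomp : P = Up * Matrix.diagonal p * Upᵀ)
    (hp : Antitone p)
    (q : Fin N → ℝ) (Uq : Matrix (Fin N) (Fin N) ℝ)
    (hUq : Uqᵀ * Uq = 1) (hQdecomp : Q = Uq * Matrix.diagonal q * Uqᵀ)
    (hq : Antitone q)
    (r : Fin N → ℝ) (Ur : Matrix (Fin N) (Fin N) ℝ)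
    (hUr : Urᵀ * Ur = 1) (hPQdecomp : P + Q = Ur * Matrix.diagonal r * Urᵀ)
    (hr : Antitone r) :
    ∑ l ∈ Finset.univ.filter (fun l : Fin N => (l : ℕ) < k), r l ≤
      (∑ l ∈ Finset.univ.filter (fun l : Fin N => (l : ℕ) < k), p l) +
      ∑ l ∈ Finset.univ.filter (fun l : Fin N => (l : ℕ) < k), q l := by
  exact ky_fan_top_k_eigenvalue_sum_subadditive_general
    hUp hPdecomp (isTopSet_of_antitone hp (isLowerSet_filter_val_lt N k)) rfl
    hUq hQdecomp (isTopSet_of_antitone hq (isLowerSet_filter_val_lt N k)) rfl hUr hPQdecomp
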